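/- Let X be a separable reflexive real Banach space (reflexive in the sense that the canonical embedding of X into its double dual is surjective), and let M be a nonempty, bounded, closed, convex subset of X. Let F : M → M be weakly sequentially continuous, i.e. whenever a sequence (x_n) in M converges weakly to some x ∈ M (meaning ℓ(x_n) → ℓ(x) for every continuous linear functional ℓ on X), the sequence (F(x_n)) converges weakly to F(x). Then F has at least one fixed point in M. -/

import Mathlib

namespace Scarf

def Dom {T I : Type*} (u : I → T → ℕ) (σ : Finset T) (C : Finset I) : Prop :=
  ∀ y, ∃ i ∈ C, ∀ x ∈ σ, u i y ≤ u i x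

def Adj {T I : Type*} (d ρ : Finset T × Finset I) : Prop :=
  (d.2 = ρ.2 ∧ d.1 ⊆ ρ.1) ∨ (d.1 = ρ.1 ∧ ρ.2 ⊆ d.2)

set_option linter.unusedSectionVars false
variable {T I : Type*} [DecidableEq T] [DecidableEq I] {u : I → T → ℕ}

theorem Dom.mono {σ τ : Finset T} {C D : Finset I} (h : Dom u σ C) (h1 : τ ⊆ σ) (h2 : C ⊆ D) :
    Dom u τ D := fun y => by
  obtain ⟨i, hi, hx⟩ := h y
  exact ⟨i, h2 hi, fun x hxx => hx x (h1 hxx)⟩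

theorem exists_argmin (u : I → T → ℕ) {σ : Finset T} (h : σ.Nonempty) :
    ∃ m : I → T, ∀ i, m i ∈ σ ∧ ∀ x ∈ σ, u i (m i) ≤ u i x := by
  have : ∀ i, ∃ y, y ∈ σ ∧ ∀ x ∈ σ, u i y ≤ u i x := fun i => by
    obtain ⟨y, hy, h⟩ := σ.exists_min_image (u i) h
    exact ⟨y, hy, h⟩
  choose m hm using this
  exact ⟨m, hm⟩

theorem image_argmin (hu : ∀ i, Function.Injective (u i)) {σ : Finset T} {C : Finset I}
    (h : Dom u σ C) {m : I → T} (hm : ∀ i, m i ∈ σ ∧ ∀ x ∈ σ, u i (m i) ≤ u i x) :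
    C.image m = σ := by
  ext x
  simp only [Finset.mem_image]
  constructor
  · rintro ⟨i, _, rfl⟩; exact (hm i).1
  · intro hx
    obtain ⟨i, hi, h'⟩ := h x
    exact ⟨i, hi, hu i (le_antisymm ((hm i).2 x hx) (h' _ (hm i).1))⟩

def Q (u : I → T → ℕ) (τ : Finset T) (D : Finset I) (m : I → T) (k : I)
    (ρ : Finset T × Finset I) : Prop :=
  (ρ.1 = τ ∧ ρ.2 = D.erase k ∧ Dom u τ (D.erase k)) ∨
  (ρ.2 = D ∧ ∃ y, y ∉ τ ∧ ρ.1 = insert y τ ∧ (∀ i ∈ D.erase k, u i (m i) < u i y) ∧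
    Dom u (insert y τ) D)

theorem Q_existsUnique [Fintype T] (hu : ∀ i, Function.Injective (u i)) {τ : Finset T}
    {D : Finset I} (h : Dom u τ D) {m : I → T}
    (hm : ∀ i, m i ∈ τ ∧ ∀ x ∈ τ, u i (m i) ≤ u i x) {k : I} (hk : k ∈ D)
    (him : (D.erase k).image m = τ) : ∃! ρ, Q u τ D m k ρ := by
  classical
  by_cases hM : ∃ y, ∀ i ∈ D.erase k, u i (m i) < u i y
  · obtain ⟨y, hy, hmax⟩ := (Finset.univ.filter fun y => ∀ i ∈ D.erase k, u i (m i) < u i y).exists_max_image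
      (u k) (by obtain ⟨y, hy⟩ := hM; exact ⟨y, by simpa using hy⟩)
    simp only [Finset.mem_filter, Finset.mem_univ, true_and] at hy hmax
    have hyτ : y ∉ τ := by
      intro hyt
      rw [← him] at hyt
      obtain ⟨i, hi, rfl⟩ := Finset.mem_image.1 hyt
      exact lt_irrefl _ (hy i hi)
    refine ⟨(insert y τ, D), Or.inr ⟨rfl, y, hyτ, rfl, hy, ?_⟩, ?_⟩
    · intro z
      by_cases hz : ∀ i ∈ D.erase k, u i (m i) < u i z
      · refine ⟨k, hk, ?_⟩
        intro x hx
        rw [Finset.mem_insert] at hx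
        rcases hx with rfl | hx
        · exact hmax z hz
        · refine (hmax z hz).trans ?_
          obtain ⟨i, hi, h'⟩ := h y
          by_cases hik : i = k
          · subst hik; exact h' x hx
          · have h1 := hy i (Finset.mem_erase.2 ⟨hik, hi⟩)
            have h2 := h' _ (hm i).1
            omega
      · push Not at hz
        obtain ⟨i, hi, h'⟩ := hz
        refine ⟨i, Finset.mem_of_mem_erase hi, ?_⟩
        intro x hx
        rw [Finset.mem_insert] at hx
        rcases hx with rfl | hx
        · exact h'.trans (hy i hi).le
        · exact h'.trans ((hm i).2 x hx)
    · rintro ⟨σ, C⟩ (⟨_, _, h3⟩ | ⟨h1, y', hy', h2, h3, h4⟩)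
      · exfalso
        obtain ⟨i, hi, h'⟩ := h3 y
        have := h' _ (hm i).1
        have := hy i hi
        omega
      · simp only at h1 h2
        subst h1 h2
        have hyy : y' = y := by
          apply hu k
          apply le_antisymm (hmax y' h3)
          obtain ⟨i, hi, h'⟩ := h4 y
          by_cases hik : i = k
          · subst hik; exact h' y' (by simp)
          · have h1 := hy i (Finset.mem_erase.2 ⟨hik, hi⟩)
            have h2 := h' _ (Finset.mem_insert_of_mem (hm i).1)
            omega
        rw [hyy]
  · push Not at hM
    refine ⟨(τ, D.erase k), Or.inl ⟨rfl, rfl, ?_⟩, ?_⟩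
    · intro y
      obtain ⟨i, hi, h'⟩ := hM y
      exact ⟨i, hi, fun x hx => h'.trans ((hm i).2 x hx)⟩
    · rintro ⟨σ, C⟩ (⟨h1, h2, _⟩ | ⟨_, y, _, _, h3, _⟩)
      · simp only at h1 h2
        rw [h1, h2]
      · obtain ⟨i, hi, h'⟩ := hM y
        have := h3 i hi
        omega

theorem Q_disjoint {τ : Finset T}
    {D : Finset I} (h : Dom u τ D) {m : I → T}
    (hm : ∀ i, m i ∈ τ ∧ ∀ x ∈ τ, u i (m i) ≤ u i x) {a b : I} (ha : a ∈ D) (hb : b ∈ D)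
    (hab : a ≠ b) {ρ : Finset T × Finset I} (h1 : Q u τ D m a ρ) (h2 : Q u τ D m b ρ) : False := by
  obtain ⟨σ, C⟩ := ρ
  have key : ∀ k ∈ D, D.erase k ≠ D := fun k hk he => by
    have := Finset.notMem_erase k D
    rw [he] at this; exact this hk
  rcases h1 with ⟨_, h1, _⟩ | ⟨h1, y, hy, h1', h1'', _⟩ <;>
    rcases h2 with ⟨_, h2, _⟩ | ⟨h2, z, hz, h2', h2'', _⟩ <;> simp only at *
  · have : a ∈ D.erase b := Finset.mem_erase.2 ⟨hab, ha⟩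
    rw [← h2, h1] at this
    simp at this
  · exact key a ha (h1.symm.trans h2)
  · exact key b hb (h2.symm.trans h1)
  · have hyz : y = z := by
      have : y ∈ insert z τ := by rw [← h2', h1']; simp
      rw [Finset.mem_insert] at this
      tauto
    subst hyz
    obtain ⟨i, hi, h'⟩ := h y
    have h3 := h' _ (hm i).1
    by_cases hia : i = a
    · have := h2'' i (Finset.mem_erase.2 ⟨by rw [hia]; exact hab, hi⟩)
      omega
    · have := h1'' i (Finset.mem_erase.2 ⟨hia, hi⟩)
      omega

open Classical in
theorem inner_door [Fintype T] [Fintype I] (hu : ∀ i, Function.Injective (u i)) {τ : Finset T}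
    {D : Finset I} (h : Dom u τ D) (hne : τ.Nonempty) (hcard : D.card = τ.card + 1) :
    (Finset.univ.filter fun ρ : Finset T × Finset I =>
      (Dom u ρ.1 ρ.2 ∧ ρ.1.card = ρ.2.card) ∧ Adj (τ, D) ρ).card = 2 := by
  obtain ⟨m, hm⟩ := exists_argmin u hne
  have him := image_argmin hu h hm
  obtain ⟨a, ha, b, hb, hab, hmab⟩ := Finset.exists_ne_map_eq_of_card_lt_of_maps_to
    (s := D) (t := τ) (f := m) (by omega) (fun i _ => (hm i).1)
  have hima : (D.erase a).image m = τ := by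
    rw [← him]
    ext x
    simp only [Finset.mem_image, Finset.mem_erase]
    constructor
    · rintro ⟨i, hi, rfl⟩; exact ⟨i, hi.2, rfl⟩
    · rintro ⟨i, hi, rfl⟩
      by_cases hia : i = a
      · exact ⟨b, ⟨hab.symm, hb⟩, by rw [hia, hmab]⟩
      · exact ⟨i, ⟨hia, hi⟩, rfl⟩
  have himb : (D.erase b).image m = τ := by
    rw [← him]
    ext x
    simp only [Finset.mem_image, Finset.mem_erase]
    constructor
    · rintro ⟨i, hi, rfl⟩; exact ⟨i, hi.2, rfl⟩
    · rintro ⟨i, hi, rfl⟩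
      by_cases hia : i = b
      · exact ⟨a, ⟨hab, ha⟩, by rw [hia, hmab]⟩
      · exact ⟨i, ⟨hia, hi⟩, rfl⟩
  obtain ⟨ρa, hρa, hua⟩ := Q_existsUnique hu h hm ha hima
  obtain ⟨ρb, hρb, hub⟩ := Q_existsUnique hu h hm hb himb
  have Qroom : ∀ k ∈ D, ∀ ρ, Q u τ D m k ρ →
      (Dom u ρ.1 ρ.2 ∧ ρ.1.card = ρ.2.card) ∧ Adj (τ, D) ρ := by
    rintro k hk ⟨σ, C⟩ (⟨h1, h2, h3⟩ | ⟨h1, y, hy, h2, h3, h4⟩) <;> simp only at *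
    · subst h1 h2
      refine ⟨⟨h3, ?_⟩, Or.inr ⟨rfl, Finset.erase_subset _ _⟩⟩
      rw [Finset.card_erase_of_mem hk]; omega
    · subst h1 h2
      refine ⟨⟨h4, ?_⟩, Or.inl ⟨rfl, Finset.subset_insert _ _⟩⟩
      rw [Finset.card_insert_of_notMem hy]; omega
  rw [Finset.card_eq_two]
  refine ⟨ρa, ρb, fun he => Q_disjoint h hm ha hb hab hρa (he ▸ hρb), ?_⟩
  ext ρ
  simp only [Finset.mem_filter, Finset.mem_univ, true_and, Finset.mem_insert, Finset.mem_singleton]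
  constructor
  · rintro ⟨⟨h1, h2⟩, h3⟩
    suffices Q u τ D m a ρ ∨ Q u τ D m b ρ by
      rcases this with h | h
      · exact Or.inl (hua _ h)
      · exact Or.inr (hub _ h)
    obtain ⟨σ, C⟩ := ρ
    rcases h3 with ⟨h3, h4⟩ | ⟨h3, h4⟩ <;> simp only at h1 h2 h3 h4
    · subst h3
      obtain ⟨y, hy⟩ : ∃ y, σ \ τ = {y} := by
        rw [← Finset.card_eq_one, Finset.card_sdiff_of_subset h4]; omega
      have hyτ : y ∉ τ := by
        have : y ∈ σ \ τ := by rw [hy]; simp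
        exact (Finset.mem_sdiff.1 this).2
      have hσ : σ = insert y τ := by
        rw [← Finset.sdiff_union_of_subset h4, hy]; rfl
      obtain ⟨m', hm'⟩ := exists_argmin u (σ := σ) (hne.mono h4)
      have him' := image_argmin hu h1 hm'
      have hinj : Set.InjOn m' D := by
        rw [← Finset.card_image_iff, him', h2]
      obtain ⟨k, hk, hky⟩ : ∃ k ∈ D, m' k = y := by
        have : y ∈ D.image m' := by rw [him', hσ]; simp
        simpa using this
      have hother : ∀ i ∈ D.erase k, m' i = m i ∧ u i (m i) < u i y := by
        intro i hi
        obtain ⟨hik, hi⟩ := Finset.mem_erase.1 hi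
        have h5 : m' i ≠ y := fun h => hik (hinj hi hk (h.trans hky.symm))
        have h6 : m' i ∈ τ := by
          have := (hm' i).1
          rw [hσ, Finset.mem_insert] at this
          tauto
        have h7 : m' i = m i := hu i (le_antisymm ((hm' i).2 _ (h4 (hm i).1)) ((hm i).2 _ h6))
        refine ⟨h7, ?_⟩
        rw [← h7]
        exact lt_of_le_of_ne ((hm' i).2 y (by rw [hσ]; simp)) (fun h => h5 (hu i h))
      have hQ : Q u τ D m k (σ, D) :=
        Or.inr ⟨rfl, y, hyτ, hσ, fun i hi => (hother i hi).2, hσ ▸ h1⟩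
      by_cases hka : a = k
      · left; rwa [hka]
      by_cases hkb : b = k
      · right; rwa [hkb]
      exfalso
      apply hab
      apply hinj ha hb
      rw [(hother a (Finset.mem_erase.2 ⟨hka, ha⟩)).1, (hother b (Finset.mem_erase.2 ⟨hkb, hb⟩)).1,
        hmab]
    · subst h3
      have himC := image_argmin hu h1 hm
      have hinj : Set.InjOn m C := by
        rw [← Finset.card_image_iff, himC, h2]
      obtain ⟨k, hk⟩ : ∃ k, D \ C = {k} := by
        rw [← Finset.card_eq_one, Finset.card_sdiff_of_subset h4]; omega
      have hC : C = D.erase k := by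
        rw [← Finset.sdiff_singleton_eq_erase, ← hk, Finset.sdiff_sdiff_eq_self h4]
      have hQ : Q u τ D m k (τ, C) := Or.inl ⟨rfl, hC, hC ▸ h1⟩
      by_cases hka : a = k
      · left; rwa [hka]
      by_cases hkb : b = k
      · right; rwa [hkb]
      exfalso
      apply hab
      apply hinj _ _ hmab
      · rw [hC]; exact Finset.mem_coe.2 (Finset.mem_erase.2 ⟨hka, ha⟩)
      · rw [hC]; exact Finset.mem_coe.2 (Finset.mem_erase.2 ⟨hkb, hb⟩)
  · rintro (rfl | rfl)
    · exact Qroom a ha _ hρa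
    · exact Qroom b hb _ hρb

open Classical in
theorem outer_door [Fintype T] [Fintype I] [Nonempty T] (hu : ∀ i, Function.Injective (u i))
    (i : I) :
    (Finset.univ.filter fun ρ : Finset T × Finset I =>
      (Dom u ρ.1 ρ.2 ∧ ρ.1.card = ρ.2.card) ∧ Adj (∅, {i}) ρ).card = 1 := by
  obtain ⟨y, -, hy⟩ := Finset.univ.exists_max_image (u i) Finset.univ_nonempty
  rw [Finset.card_eq_one]
  refine ⟨({y}, {i}), ?_⟩
  ext ⟨σ, C⟩
  simp only [Finset.mem_filter, Finset.mem_univ, true_and, Finset.mem_singleton, Prod.mk.injEq]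
  constructor
  · rintro ⟨⟨h1, h2⟩, ⟨h3, h4⟩ | ⟨h3, h4⟩⟩ <;> simp only at h3 h4
    · subst h3
      refine ⟨?_, rfl⟩
      obtain ⟨z, rfl⟩ := Finset.card_eq_one.1 (h2.trans (Finset.card_singleton i))
      obtain ⟨j, hj, h'⟩ := h1 y
      obtain rfl := Finset.mem_singleton.1 hj
      rw [hu j (le_antisymm (h' z (by simp)) (hy z (by simp)))]
    · subst h3
      obtain ⟨j, hj, h'⟩ := h1 y
      rw [Finset.card_empty] at h2
      rw [Finset.card_eq_zero.1 h2.symm] at hj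
      simp at hj
  · rintro ⟨rfl, rfl⟩
    refine ⟨⟨fun z => ⟨i, by simp, by simpa using hy z (by simp)⟩, by simp⟩, Or.inl ⟨rfl, by simp⟩⟩

theorem exists_erase {α : Type*} [DecidableEq α] {s t : Finset α} (h : t ⊆ s)
    (hc : s.card = t.card + 1) : ∃ z ∈ s, t = s.erase z := by
  obtain ⟨k, hk⟩ : ∃ k, s \ t = {k} := by
    rw [← Finset.card_eq_one, Finset.card_sdiff_of_subset h]; omega
  refine ⟨k, ?_, ?_⟩
  · have : k ∈ s \ t := by rw [hk]; simp
    exact (Finset.mem_sdiff.1 this).1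
  · rw [← Finset.sdiff_singleton_eq_erase, ← hk, Finset.sdiff_sdiff_eq_self h]

open Classical in
theorem room_two [Fintype T] [Fintype I] (c : T → I) (i : I) {σ : Finset T} {C : Finset I}
    (h : Dom u σ C) (hcard : σ.card = C.card) (hc : σ.image c ≠ C) {x : T} (hx : x ∈ σ)
    (hi : i ∈ C) (him : (σ.erase x).image c = C.erase i) :
    (Finset.univ.filter fun d : Finset T × Finset I =>
      (Dom u d.1 d.2 ∧ d.2.card = d.1.card + 1 ∧ d.1.image c = d.2.erase i) ∧
        Adj d (σ, C)).card = 2 := by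
  have hσ : σ.image c = insert (c x) (C.erase i) := by
    rw [← him, ← Finset.image_insert, Finset.insert_erase hx]
  have hxi : c x ≠ i := by
    intro he
    apply hc
    rw [hσ, he, Finset.insert_erase hi]
  have hCpos := Finset.card_pos.2 ⟨i, hi⟩
  rw [Finset.card_eq_two]
  by_cases hxC : c x ∈ C
  · have : c x ∈ (σ.erase x).image c := by rw [him]; exact Finset.mem_erase.2 ⟨hxi, hxC⟩
    obtain ⟨x', hx', hcx⟩ := Finset.mem_image.1 this
    obtain ⟨hxx, hx'⟩ := Finset.mem_erase.1 hx'
    have hσ' : σ.image c = C.erase i := by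
      rw [hσ, Finset.insert_eq_self]; exact Finset.mem_erase.2 ⟨hxi, hxC⟩
    have him' : (σ.erase x').image c = C.erase i := by
      rw [← hσ']
      apply le_antisymm (Finset.image_subset_image (Finset.erase_subset _ _))
      intro w hw
      obtain ⟨z, hz, rfl⟩ := Finset.mem_image.1 hw
      by_cases hzx : z = x'
      · exact Finset.mem_image.2 ⟨x, Finset.mem_erase.2 ⟨hxx.symm, hx⟩, by rw [hzx, hcx]⟩
      · exact Finset.mem_image.2 ⟨z, Finset.mem_erase.2 ⟨hzx, hz⟩, rfl⟩
    refine ⟨(σ.erase x, C), (σ.erase x', C), ?_, ?_⟩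
    · intro he
      have he := congrArg Prod.fst he
      simp only at he
      have : x ∈ σ.erase x' := Finset.mem_erase.2 ⟨hxx.symm, hx⟩
      rw [← he] at this
      simp at this
    ext ⟨τ, D⟩
    simp only [Finset.mem_filter, Finset.mem_univ, true_and, Finset.mem_insert,
      Finset.mem_singleton, Prod.mk.injEq]
    constructor
    · rintro ⟨⟨h1, h2, h3⟩, ⟨h4, h5⟩ | ⟨h4, h5⟩⟩ <;> simp only at h4 h5
      · subst h4
        obtain ⟨z, hz, rfl⟩ := exists_erase h5 (by omega)
        have hinj : Set.InjOn c (σ.erase z) := by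
          rw [← Finset.card_image_iff, h3, Finset.card_erase_of_mem hi]; omega
        by_cases hzx : z = x
        · left; rw [hzx]; exact ⟨rfl, rfl⟩
        by_cases hzx' : z = x'
        · right; rw [hzx']; exact ⟨rfl, rfl⟩
        exact absurd (hinj (Finset.mem_coe.2 (Finset.mem_erase.2 ⟨Ne.symm hzx', hx'⟩))
          (Finset.mem_coe.2 (Finset.mem_erase.2 ⟨Ne.symm hzx, hx⟩)) hcx) hxx
      · subst h4
        exfalso
        rw [hσ'] at h3
        have := congrArg Finset.card h3
        rw [Finset.card_erase_of_mem hi, Finset.card_erase_of_mem (h5 hi)] at this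
        omega
    · rintro (⟨rfl, rfl⟩ | ⟨rfl, rfl⟩)
      · refine ⟨⟨h.mono (Finset.erase_subset _ _) subset_rfl, ?_, him⟩,
          Or.inl ⟨rfl, Finset.erase_subset _ _⟩⟩
        rw [Finset.card_erase_of_mem hx]; omega
      · refine ⟨⟨h.mono (Finset.erase_subset _ _) subset_rfl, ?_, him'⟩,
          Or.inl ⟨rfl, Finset.erase_subset _ _⟩⟩
        rw [Finset.card_erase_of_mem hx']; omega
  · refine ⟨(σ.erase x, C), (σ, insert (c x) C), ?_, ?_⟩
    · intro he
      have he := congrArg Prod.snd he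
      simp only at he
      apply hxC
      rw [he]; simp
    ext ⟨τ, D⟩
    simp only [Finset.mem_filter, Finset.mem_univ, true_and, Finset.mem_insert,
      Finset.mem_singleton, Prod.mk.injEq]
    constructor
    · rintro ⟨⟨h1, h2, h3⟩, ⟨h4, h5⟩ | ⟨h4, h5⟩⟩ <;> simp only at h4 h5
      · subst h4
        obtain ⟨z, hz, rfl⟩ := exists_erase h5 (by omega)
        by_cases hzx : z = x
        · left; rw [hzx]; exact ⟨rfl, rfl⟩
        exfalso
        apply hxC
        have : c x ∈ (σ.erase z).image c :=
          Finset.mem_image_of_mem _ (Finset.mem_erase.2 ⟨Ne.symm hzx, hx⟩)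
        rw [h3] at this
        exact Finset.mem_of_mem_erase this
      · subst h4
        right
        refine ⟨rfl, ?_⟩
        have : c x ∈ D := by
          have : c x ∈ τ.image c := Finset.mem_image_of_mem _ hx
          rw [h3] at this
          exact Finset.mem_of_mem_erase this
        refine (Finset.eq_of_subset_of_card_le (Finset.insert_subset this h5) ?_).symm
        rw [Finset.card_insert_of_notMem hxC]; omega
    · rintro (⟨rfl, rfl⟩ | ⟨rfl, rfl⟩)
      · refine ⟨⟨h.mono (Finset.erase_subset _ _) subset_rfl, ?_, him⟩,
          Or.inl ⟨rfl, Finset.erase_subset _ _⟩⟩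
        rw [Finset.card_erase_of_mem hx]; omega
      · refine ⟨⟨h.mono subset_rfl (Finset.subset_insert _ _), ?_, ?_⟩,
          Or.inr ⟨rfl, Finset.subset_insert _ _⟩⟩
        · rw [Finset.card_insert_of_notMem hxC]; omega
        · rw [hσ, Finset.erase_insert_of_ne hxi]

open Classical in
theorem room_even [Fintype T] [Fintype I] (c : T → I) (i : I) {σ : Finset T} {C : Finset I}
    (h : Dom u σ C) (hcard : σ.card = C.card) (hc : σ.image c ≠ C) :
    Even (Finset.univ.filter fun d : Finset T × Finset I =>
      (Dom u d.1 d.2 ∧ d.2.card = d.1.card + 1 ∧ d.1.image c = d.2.erase i) ∧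
        Adj d (σ, C)).card := by
  rcases Finset.eq_empty_or_nonempty (Finset.univ.filter fun d : Finset T × Finset I =>
      (Dom u d.1 d.2 ∧ d.2.card = d.1.card + 1 ∧ d.1.image c = d.2.erase i) ∧
        Adj d (σ, C)) with he | ⟨⟨τ, D⟩, hd⟩
  · rw [he]; simp
  suffices ∃ x ∈ σ, i ∈ C ∧ (σ.erase x).image c = C.erase i by
    obtain ⟨x, hx, hi, him⟩ := this
    rw [room_two c i h hcard hc hx hi him]
    exact even_two
  simp only [Finset.mem_filter, Finset.mem_univ, true_and] at hd
  obtain ⟨⟨h1, h2, h3⟩, h4⟩ := hd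
  have hiD : i ∈ D := by
    by_contra hiD
    rw [Finset.erase_eq_of_notMem hiD] at h3
    have := Finset.card_image_le (s := τ) (f := c)
    rw [h3] at this
    omega
  rcases h4 with ⟨h4, h5⟩ | ⟨h4, h5⟩ <;> simp only at h4 h5
  · subst h4
    obtain ⟨x, hx, rfl⟩ := exists_erase h5 (by omega)
    exact ⟨x, hx, hiD, h3⟩
  · subst h4
    obtain ⟨j, hj, rfl⟩ := exists_erase h5 (by omega)
    have hij : j ≠ i := by
      rintro rfl
      exact hc h3
    have hinj : Set.InjOn c τ := by
      rw [← Finset.card_image_iff, h3, Finset.card_erase_of_mem hiD]; omega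
    have : j ∈ τ.image c := by rw [h3]; exact Finset.mem_erase.2 ⟨hij, hj⟩
    obtain ⟨x, hx, rfl⟩ := Finset.mem_image.1 this
    refine ⟨x, hx, Finset.mem_erase.2 ⟨hij.symm, hiD⟩, ?_⟩
    rw [Finset.erase_right_comm, ← h3]
    ext w
    simp only [Finset.mem_image, Finset.mem_erase]
    constructor
    · rintro ⟨z, ⟨hz, hz'⟩, rfl⟩
      exact ⟨fun he => hz (hinj hz' hx he), z, hz', rfl⟩
    · rintro ⟨hw, z, hz, rfl⟩
      exact ⟨z, ⟨fun he => hw (by rw [he]), hz⟩, rfl⟩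

/-- Scarf's combinatorial lemma. -/
theorem scarf [Fintype T] [Fintype I] [Nonempty T] [Nonempty I]
    (hu : ∀ i, Function.Injective (u i)) (c : T → I) :
    ∃ (σ : Finset T) (C : Finset I), Dom u σ C ∧ σ.image c = C := by
  classical
  by_contra! hcon
  obtain ⟨i⟩ := ‹Nonempty I›
  let R := Finset.univ.filter fun ρ : Finset T × Finset I => Dom u ρ.1 ρ.2 ∧ ρ.1.card = ρ.2.card
  let Ds := Finset.univ.filter fun d : Finset T × Finset I =>
      Dom u d.1 d.2 ∧ d.2.card = d.1.card + 1 ∧ d.1.image c = d.2.erase i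
  have key := Finset.sum_card_bipartiteAbove_eq_sum_card_bipartiteBelow (s := Ds) (t := R) (Adj)
  have hR : Even (∑ ρ ∈ R, (Ds.bipartiteBelow Adj ρ).card) := by
    apply Finset.even_sum
    rintro ⟨σ, C⟩ hρ
    simp only [R, Finset.mem_filter, Finset.mem_univ, true_and] at hρ
    have := room_even c i hρ.1 hρ.2 (hcon _ _ hρ.1)
    rw [← Finset.filter_filter] at this
    exact this
  have hmem : ((∅ : Finset T), ({i} : Finset I)) ∈ Ds := by
    rw [Finset.mem_filter]
    exact ⟨Finset.mem_univ _, fun y => ⟨i, by simp, by simp⟩, by simp, by simp⟩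
  rw [← key, ← Finset.add_sum_erase _ _ hmem] at hR
  have h1 : (R.bipartiteAbove Adj ((∅ : Finset T), ({i} : Finset I))).card = 1 := by
    have := outer_door hu i
    rw [← Finset.filter_filter] at this
    exact this
  have h2 : Even (∑ d ∈ Ds.erase (∅, {i}), (R.bipartiteAbove Adj d).card) := by
    apply Finset.even_sum
    rintro ⟨τ, D⟩ hd
    simp only [Ds, Finset.mem_erase, Finset.mem_filter, Finset.mem_univ, true_and] at hd
    obtain ⟨hne, h1, h2, h3⟩ := hd
    have hτ : τ.Nonempty := by
      rw [Finset.nonempty_iff_ne_empty]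
      rintro rfl
      apply hne
      obtain ⟨j, rfl⟩ := Finset.card_eq_one.1 h2
      by_cases hij : i = j
      · rw [hij]
      · rw [Finset.erase_eq_of_notMem (by simpa using hij)] at h3
        simp at h3
    have := inner_door hu h1 hτ h2
    rw [← Finset.filter_filter] at this
    have h' : (R.bipartiteAbove Adj (τ, D)).card = 2 := this
    rw [h']
    exact even_two
  rw [h1] at hR
  rcases hR with ⟨p, hp⟩
  rcases h2 with ⟨q, hq⟩
  omega

end Scarf

namespace Brouwer
open Filter Topology

theorem approx {ι : Type*} [Fintype ι] [Nonempty ι] (f : (ι → ℝ) → (ι → ℝ))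
    (hmaps : ∀ x ∈ stdSimplex ℝ ι, f x ∈ stdSimplex ℝ ι) (N : ℕ) (hN : 0 < N) :
    ∃ x ∈ stdSimplex ℝ ι, ∀ i, ∃ y ∈ stdSimplex ℝ ι,
      (∀ j, |x j - y j| ≤ (Fintype.card ι : ℝ) / N) ∧
      y i ≤ f y i + (Fintype.card ι : ℝ) / N := by
  classical
  let T := {x : ι → Fin (N + 1) // ∑ i, (x i : ℕ) = N}
  have mkT : ∀ y : ι → ℕ, ∑ i, y i = N → ∃ t : T, ∀ i, (t.1 i : ℕ) = y i := fun y hy => by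
    have hle : ∀ i, y i < N + 1 := fun i => by
      have := Finset.single_le_sum (f := y) (fun _ _ => Nat.zero_le _) (Finset.mem_univ i)
      omega
    exact ⟨⟨fun i => ⟨y i, hle i⟩, by simpa using hy⟩, fun i => rfl⟩
  obtain ⟨i₀⟩ := ‹Nonempty ι›
  have : Nonempty ι := ⟨i₀⟩
  have : Nonempty T := by
    obtain ⟨t, _⟩ := mkT (fun i => if i = i₀ then N else 0) (by simp)
    exact ⟨t⟩
  let e := Fintype.equivFin T
  let K := Fintype.card T
  let u : ι → T → ℕ := fun i x => (x.1 i : ℕ) * K + (e x : ℕ)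
  have ult : ∀ i (x y : T), (x.1 i : ℕ) < y.1 i → u i x < u i y := fun i x y h => by
    have h1 : (e x : ℕ) < K := (e x).2
    have h2 : ((x.1 i : ℕ) + 1) * K ≤ y.1 i * K := Nat.mul_le_mul_right _ h
    simp only [u]
    nlinarith
  have hu : ∀ i, Function.Injective (u i) := fun i x y h => by
    have h3 : (x.1 i : ℕ) = y.1 i := by
      rcases lt_trichotomy (x.1 i : ℕ) (y.1 i) with h' | h' | h'
      · exact absurd h (ult i x y h').ne
      · exact h'
      · exact absurd h (ult i y x h').ne'
    simp only [u, h3] at h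
    exact e.injective (Fin.ext (by omega))
  have hNR : (0 : ℝ) < N := by exact_mod_cast hN
  let p : T → ι → ℝ := fun x i => (x.1 i : ℕ) / (N : ℝ)
  have hp : ∀ x, p x ∈ stdSimplex ℝ ι := fun x => by
    refine ⟨fun i => by positivity, ?_⟩
    simp only [p]
    rw [← Finset.sum_div, ← Nat.cast_sum, x.2, div_self hNR.ne']
  have hc : ∀ x : T, ∃ i, p x i ≤ f (p x) i := fun x => by
    by_contra! hcon
    have := Finset.sum_lt_sum_of_nonempty (s := Finset.univ) Finset.univ_nonempty
      (fun i _ => hcon i)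
    rw [(hp x).2, (hmaps _ (hp x)).2] at this
    exact lt_irrefl _ this
  choose c hc using hc
  obtain ⟨σ, C, hdom, him⟩ := Scarf.scarf hu c
  have hCne : C.Nonempty := by
    obtain ⟨t⟩ := ‹Nonempty T›
    obtain ⟨i, hi, _⟩ := hdom t
    exact ⟨i, hi⟩
  have hσne : σ.Nonempty := by
    rw [← him] at hCne
    exact Finset.image_nonempty.1 hCne
  obtain ⟨m, hm⟩ := Scarf.exists_argmin (fun i (x : T) => (x.1 i : ℕ)) hσne
  let mm : ι → ℕ := fun i => ((m i).1 i : ℕ)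
  have hmm : ∀ i, ∀ x ∈ σ, mm i ≤ x.1 i := fun i => (hm i).2
  have hsum : N < ∑ i ∈ C, (mm i + 1) := by
    by_contra! hle
    obtain ⟨j, hj⟩ := hCne
    obtain ⟨t, ht⟩ := mkT (fun i => (if i ∈ C then mm i + 1 else 0) +
      (if i = j then N - ∑ i ∈ C, (mm i + 1) else 0)) (by
        rw [Finset.sum_add_distrib, Finset.sum_ite_mem, Finset.univ_inter, Finset.sum_ite_eq']
        simp only [Finset.mem_univ, if_true]
        omega)
    obtain ⟨i, hi, h⟩ := hdom t
    have h1 := h (m i) (hm i).1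
    have h2 : ((m i).1 i : ℕ) < t.1 i := by
      rw [ht, if_pos hi]
      simp only [mm]
      omega
    exact absurd h1 (not_le.2 (ult i _ _ h2))
  rw [Finset.sum_add_distrib, Finset.sum_const, smul_eq_mul, mul_one] at hsum
  have hCcard : C.card ≤ Fintype.card ι := Finset.card_le_univ C
  have hsplit : ∀ x : T, ∑ i ∈ C, (x.1 i : ℕ) + ∑ i ∈ Cᶜ, (x.1 i : ℕ) = N := fun x => by
    rw [Finset.sum_add_sum_compl, x.2]
  have hmC : ∀ x ∈ σ, ∑ i ∈ C, mm i ≤ ∑ i ∈ C, (x.1 i : ℕ) := fun x hx =>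
    Finset.sum_le_sum fun i _ => hmm i x hx
  have hout : ∀ x ∈ σ, ∀ i, i ∉ C → (x.1 i : ℕ) ≤ Fintype.card ι := fun x hx i hi => by
    have h1 := Finset.single_le_sum (f := fun i => (x.1 i : ℕ)) (s := Cᶜ)
      (fun _ _ => Nat.zero_le _) (Finset.mem_compl.2 hi)
    have h2 := hsplit x
    have h3 := hmC x hx
    omega
  have hin : ∀ x ∈ σ, ∀ i ∈ C, (x.1 i : ℕ) ≤ mm i + Fintype.card ι := fun x hx i hi => by
    have h1 := Finset.add_sum_erase C (fun i => (x.1 i : ℕ)) hi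
    have h2 := Finset.add_sum_erase C mm hi
    have h3 := hsplit x
    have h4 : ∑ i ∈ C.erase i, mm i ≤ ∑ i ∈ C.erase i, (x.1 i : ℕ) :=
      Finset.sum_le_sum fun i _ => hmm i x hx
    omega
  have hclose : ∀ x ∈ σ, ∀ y ∈ σ, ∀ i, (x.1 i : ℕ) ≤ y.1 i + Fintype.card ι :=
    fun x hx y hy i => by
      by_cases hi : i ∈ C
      · have := hin x hx i hi
        have := hmm i y hy
        omega
      · have := hout x hx i hi
        omega
  have hclose' : ∀ x ∈ σ, ∀ y ∈ σ, ∀ i, p x i - p y i ≤ (Fintype.card ι : ℝ) / N :=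
    fun x hx y hy i => by
      have h : ((x.1 i : ℕ) : ℝ) ≤ (y.1 i : ℕ) + Fintype.card ι := by
        exact_mod_cast hclose x hx y hy i
      simp only [p]
      rw [← sub_div]
      gcongr
      linarith
  obtain ⟨x, hx⟩ := hσne
  refine ⟨p x, hp x, fun i => ?_⟩
  by_cases hi : i ∈ C
  · rw [← him] at hi
    obtain ⟨y, hy, rfl⟩ := Finset.mem_image.1 hi
    refine ⟨p y, hp y, fun j => abs_le.2 ⟨?_, hclose' x hx y hy j⟩, ?_⟩
    · have := hclose' y hy x hx j
      linarith
    · have h1 := hc y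
      have : (0 : ℝ) ≤ (Fintype.card ι : ℝ) / N := by positivity
      linarith
  · refine ⟨p x, hp x, fun j => by rw [sub_self, abs_zero]; positivity, ?_⟩
    have h1 := (hmaps _ (hp x)).1 i
    have h2 : p x i ≤ (Fintype.card ι : ℝ) / N := by
      simp only [p]
      gcongr
      exact_mod_cast hout x hx i hi
    linarith

/-- Brouwer's fixed point theorem on the standard simplex. -/
theorem brouwer {ι : Type*} [Fintype ι] [Nonempty ι] (f : (ι → ℝ) → (ι → ℝ))
    (hmaps : ∀ x ∈ stdSimplex ℝ ι, f x ∈ stdSimplex ℝ ι)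
    (hf : ContinuousOn f (stdSimplex ℝ ι)) : ∃ x ∈ stdSimplex ℝ ι, f x = x := by
  have h := fun N : ℕ => approx f hmaps (N + 1) N.succ_pos
  choose x hx y hy hxy hfy using h
  obtain ⟨a, ha, φ, hφ, hlim⟩ := (isCompact_stdSimplex ℝ ι).tendsto_subseq hx
  have hε : Tendsto (fun N : ℕ => (Fintype.card ι : ℝ) / ((φ N + 1 : ℕ) : ℝ)) atTop (𝓝 0) :=
    (tendsto_const_div_atTop_nhds_zero_nat (Fintype.card ι : ℝ)).comp
      ((tendsto_add_atTop_nat 1).comp hφ.tendsto_atTop)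
  have hle : ∀ i, a i ≤ f a i := fun i => by
    have hyl : Tendsto (fun N => y (φ N) i) atTop (𝓝 a) := by
      rw [tendsto_pi_nhds] at hlim ⊢
      intro j
      have h1 : Tendsto (fun N => x (φ N) j - y (φ N) i j) atTop (𝓝 0) :=
        squeeze_zero_norm (fun N => hxy (φ N) i j) hε
      simpa using (hlim j).sub h1
    have hfl : Tendsto (fun N => f (y (φ N) i)) atTop (𝓝 (f a)) :=
      (hf a ha).tendsto.comp (tendsto_nhdsWithin_iff.2 ⟨hyl, Eventually.of_forall fun N => hy _ _⟩)
    have h2 := ((tendsto_pi_nhds.1 hfl) i).add hε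
    rw [add_zero] at h2
    exact le_of_tendsto_of_tendsto' ((tendsto_pi_nhds.1 hyl) i) h2 fun N => hfy (φ N) i
  refine ⟨a, ha, ?_⟩
  have heq := (Finset.sum_eq_sum_iff_of_le (s := Finset.univ) (fun i _ => hle i)).1
    (by rw [ha.2, (hmaps a ha).2])
  funext i
  exact (heq i (Finset.mem_univ i)).symm

end Brouwer

namespace Tikhonov
open Filter Topology

theorem approx_fix {X : Type*} [NormedAddCommGroup X] [NormedSpace ℝ X]
    (M : Set X) (hMne : M.Nonempty) (hMbdd : Bornology.IsBounded M) (hMconv : Convex ℝ M)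
    (F : X → X) (hFmaps : ∀ x ∈ M, F x ∈ M)
    (hFweak : ∀ (x : ℕ → X) (x₀ : X), (∀ n, x n ∈ M) → x₀ ∈ M →
      (∀ ℓ : X →L[ℝ] ℝ, Filter.Tendsto (fun n => ℓ (x n)) Filter.atTop (nhds (ℓ x₀))) →
      (∀ ℓ : X →L[ℝ] ℝ, Filter.Tendsto (fun n => ℓ (F (x n))) Filter.atTop (nhds (ℓ (F x₀)))))
    (n : ℕ) (ℓ : Fin n → X →L[ℝ] ℝ) (ε : ℝ) (hε : 0 < ε) :
    ∃ x ∈ M, ∀ j, |ℓ j (F x) - ℓ j x| ≤ ε := by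
  classical
  let L : X →L[ℝ] (Fin n → ℝ) := ContinuousLinearMap.pi ℓ
  have hLb : Bornology.IsBounded (L '' M) := L.lipschitz.isBounded_image hMbdd
  have htb : TotallyBounded (L '' M) :=
    (hLb.isCompact_closure.totallyBounded).subset subset_closure
  obtain ⟨t, htM, htfin, hcov⟩ := Metric.finite_approx_of_totallyBounded htb ε hε
  have : Fintype t := htfin.fintype
  have hcov' : ∀ x ∈ M, ∃ k : t, ‖L x - k‖ < ε := fun x hx => by
    have := hcov ⟨x, hx, rfl⟩
    simp only [Set.mem_iUnion, Metric.mem_ball, dist_eq_norm] at this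
    obtain ⟨k, hk, h⟩ := this
    exact ⟨⟨k, hk⟩, h⟩
  have : Nonempty t := by
    obtain ⟨x, hx⟩ := hMne
    obtain ⟨k, _⟩ := hcov' x hx
    exact ⟨k⟩
  have hp : ∀ k : t, ∃ x ∈ M, L x = k := fun k => htM k.2
  choose p hpM hpL using hp
  let A : (t → ℝ) → X := fun s => ∑ k, s k • p k
  have hA : Continuous A := by fun_prop
  have hAM : ∀ s ∈ stdSimplex ℝ t, A s ∈ M := fun s hs =>
    hMconv.sum_mem (fun k _ => hs.1 k) hs.2 (fun k _ => hpM k)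
  let w : t → (Fin n → ℝ) → ℝ := fun k v => max 0 (ε - ‖v - k‖)
  have hw : ∀ k, Continuous (w k) := fun k => by fun_prop
  have hw0 : ∀ k v, 0 ≤ w k v := fun k v => le_max_left _ _
  let S : (Fin n → ℝ) → ℝ := fun v => ∑ k, w k v
  have hS : Continuous S := by fun_prop
  have hSpos : ∀ x ∈ M, 0 < S (L x) := fun x hx => by
    obtain ⟨k, hk⟩ := hcov' x hx
    exact Finset.sum_pos' (fun k _ => hw0 k _)
      ⟨k, Finset.mem_univ _, lt_max_of_lt_right (by linarith)⟩
  have hLF : ContinuousOn (fun s => L (F (A s))) (stdSimplex ℝ t) := by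
    rw [continuousOn_iff_continuous_domRestrict, continuous_iff_seqContinuous]
    intro s s₀ hs
    have hs' : Tendsto (fun m => A (s m).1) atTop (𝓝 (A s₀.1)) :=
      (hA.tendsto _).comp ((continuous_subtype_val.tendsto _).comp hs)
    rw [tendsto_pi_nhds]
    intro j
    exact hFweak (fun m => A (s m).1) (A s₀.1) (fun m => hAM _ (s m).2) (hAM _ s₀.2)
      (fun l => (l.continuous.tendsto _).comp hs') (ℓ j)
  obtain ⟨s, hs, hfix⟩ := Brouwer.brouwer
    (fun s k => w k (L (F (A s))) / S (L (F (A s))))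
    (fun s hs => by
      have h := hSpos _ (hFmaps _ (hAM s hs))
      refine ⟨fun k => div_nonneg (hw0 _ _) h.le, ?_⟩
      rw [← Finset.sum_div]
      exact div_self h.ne')
    (by
      rw [continuousOn_pi]
      intro k
      exact ((hw k).comp_continuousOn hLF).div (hS.comp_continuousOn hLF)
        fun s hs => (hSpos _ (hFmaps _ (hAM s hs))).ne')
  refine ⟨A s, hAM s hs, fun j => ?_⟩
  set v := L (F (A s)) with hv
  have hvj : ℓ j (F (A s)) = v j := rfl
  have h1 : ℓ j (F (A s)) - ℓ j (A s) = ∑ k, s k * (v j - k.1 j) := by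
    have h2 : ∀ k, ℓ j (p k) = k.1 j := fun k => congrFun (hpL k) j
    simp only [A, map_sum, map_smul, smul_eq_mul, h2, mul_sub, Finset.sum_sub_distrib]
    rw [← Finset.sum_mul, hs.2, one_mul]
    rfl
  rw [h1]
  calc |∑ k, s k * (v j - k.1 j)| ≤ ∑ k, |s k * (v j - k.1 j)| := Finset.abs_sum_le_sum_abs _ _
    _ ≤ ∑ k, s k * ε := by
      refine Finset.sum_le_sum fun k _ => ?_
      rw [abs_mul, abs_of_nonneg (hs.1 k)]
      by_cases hk : ‖v - k‖ < ε
      · refine mul_le_mul_of_nonneg_left ?_ (hs.1 k)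
        exact (norm_le_pi_norm (v - k.1) j).trans hk.le
      · have h0 : s k = 0 := by
          rw [← hfix]
          have : w k v = 0 := max_eq_left (by linarith)
          simp only
          rw [this, zero_div]
        rw [h0]; simp
    _ = ε := by rw [← Finset.sum_mul, hs.2, one_mul]

end Tikhonov

/-- **Tikhonov fixed point theorem.** Let `X` be a separable reflexive real Banach space
(reflexive: the canonical inclusion into the double dual is surjective), `M ⊆ X` a nonempty
bounded closed convex set, and `F` a map sending `M` into `M` which is weakly sequentially
continuous on `M`.  Then `F` has a fixed point in `M`. -/
theorem tikhonov_fixed_point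
    {X : Type*} [NormedAddCommGroup X] [NormedSpace ℝ X] [CompleteSpace X]
    [TopologicalSpace.SeparableSpace X]
    (hrefl : Function.Surjective (NormedSpace.inclusionInDoubleDual ℝ X))
    (M : Set X) (hMne : M.Nonempty) (hMbdd : Bornology.IsBounded M)
    (hMclosed : IsClosed M) (hMconv : Convex ℝ M)
    (F : X → X) (hFmaps : ∀ x ∈ M, F x ∈ M)
    (hFweak : ∀ (x : ℕ → X) (x₀ : X), (∀ n, x n ∈ M) → x₀ ∈ M →
      (∀ ℓ : X →L[ℝ] ℝ, Filter.Tendsto (fun n => ℓ (x n)) Filter.atTop (nhds (ℓ x₀))) →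
      (∀ ℓ : X →L[ℝ] ℝ, Filter.Tendsto (fun n => ℓ (F (x n))) Filter.atTop (nhds (ℓ (F x₀))))) :
    ∃ x ∈ M, F x = x := by
  classical
  obtain ⟨ℓ, hℓ⟩ : ∃ ℓ : ℕ → X →L[ℝ] ℝ, ∀ x, (∀ k, ℓ k x = 0) → x = 0 := by
    choose g hg1 hg2 using fun k => exists_dual_vector'' ℝ (TopologicalSpace.denseSeq X k)
    refine ⟨g, fun x hx => ?_⟩
    by_contra hne
    have hpos : 0 < ‖x‖ := norm_pos_iff.2 hne
    obtain ⟨k, hk⟩ := (TopologicalSpace.denseRange_denseSeq X).exists_dist_lt x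
      (ε := ‖x‖ / 2) (by linarith)
    rw [dist_eq_norm] at hk
    set d := TopologicalSpace.denseSeq X k
    have h1 : ‖d‖ ≤ ‖x - d‖ := by
      have h2 : g k (x - d) = -‖d‖ := by rw [map_sub, hx k, hg2 k]; simp [d]
      have h3 := (g k).le_of_opNorm_le (hg1 k) (x - d)
      rw [h2, norm_neg, norm_norm, one_mul] at h3
      exact h3
    have h4 : ‖x‖ ≤ ‖x - d‖ + ‖d‖ := by simpa using norm_add_le (x - d) d
    linarith
  have happ : ∀ n : ℕ, ∃ x ∈ M, ∀ j : Fin n, |ℓ j (F x) - ℓ j x| ≤ 1 / ((n : ℝ) + 1) := fun n =>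
    Tikhonov.approx_fix M hMne hMbdd hMconv F hFmaps hFweak n (fun j => ℓ j) _ (by positivity)
  choose x hxM hx using happ
  -- weak compactness of `M`
  let W : Set (WeakSpace ℝ X) := toWeakSpace ℝ X '' M
  have hWcl : closure W = W := by
    rw [← hMconv.toWeakSpace_closure ℝ, hMclosed.closure_eq]
  have hWc : IsCompact W := by
    rw [← hWcl]
    apply NormedSpace.isCompact_closure_of_isBounded ℝ X
    · rw [Set.preimage_image_eq _ (toWeakSpace ℝ X).injective]
      exact hMbdd
    · intro z _
      obtain ⟨y, hy⟩ := hrefl (WeakDual.toStrongDual z)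
      refine ⟨toWeakSpace ℝ X y, ?_⟩
      refine DFunLike.ext _ _ fun l => ?_
      exact congrArg (fun q => q l) hy
  have hcont : ∀ l : X →L[ℝ] ℝ, Continuous fun z : WeakSpace ℝ X => l ((toWeakSpace ℝ X).symm z) :=
    fun l => WeakBilin.eval_continuous (topDualPairing ℝ X).flip l
  have : CompactSpace W := isCompact_iff_compactSpace.mp hWc
  have : TopologicalSpace.MetrizableSpace W :=
    Metric.PiNatEmbed.TopologicalSpace.MetrizableSpace.of_countable_separating
      (fun n (z : W) => ℓ n ((toWeakSpace ℝ X).symm z.1))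
      (fun n => (hcont (ℓ n)).comp continuous_subtype_val)
      (by
        intro z z' hne
        by_contra! hcon
        apply hne
        have := hℓ ((toWeakSpace ℝ X).symm z.1 - (toWeakSpace ℝ X).symm z'.1)
          (fun k => by rw [map_sub, hcon k, sub_self])
        exact Subtype.ext ((toWeakSpace ℝ X).symm.injective (sub_eq_zero.1 this)))
  obtain ⟨a, φ, hφ, hlim⟩ := CompactSpace.tendsto_subseq
    (fun n => (⟨toWeakSpace ℝ X (x n), x n, hxM n, rfl⟩ : W))
  obtain ⟨a, x₀, hx₀, rfl⟩ := a
  have hw : ∀ l : X →L[ℝ] ℝ, Filter.Tendsto (fun n => l (x (φ n))) Filter.atTop (nhds (l x₀)) :=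
    fun l => (((hcont l).comp continuous_subtype_val).tendsto _).comp hlim
  have hwF := hFweak (fun n => x (φ n)) x₀ (fun n => hxM _) hx₀ hw
  refine ⟨x₀, hx₀, sub_eq_zero.1 (hℓ _ fun k => ?_)⟩
  rw [map_sub]
  have h1 := (hwF (ℓ k)).sub (hw (ℓ k))
  have h2 : Filter.Tendsto (fun n => ℓ k (F (x (φ n))) - ℓ k (x (φ n))) Filter.atTop (nhds 0) := by
    refine squeeze_zero_norm' ?_
      ((tendsto_one_div_add_atTop_nhds_zero_nat (𝕜 := ℝ)).comp hφ.tendsto_atTop)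
    filter_upwards [Filter.eventually_gt_atTop k] with n hn
    exact hx (φ n) ⟨k, hn.trans_le (hφ.id_le n)⟩
  exact tendsto_nhds_unique h1 h2
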